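/- Let d ∈ ℕ, d ≥ 1, let H₁, H₂ be d×d positive semidefinite complex matrices, let E₁, E₂ ∈ ℝ, and let s ⊆ {1,2}. Let 𝔖_{H₁,E₁,H₂,E₂}^s = {ρ ∈ 𝔖(ℂ^d) : Re Tr(H_k ρ) ≤ E_k for all k ∈ {1,2} \ s and Re Tr(H_k ρ) = E_k for all k ∈ s}. Then 𝔖_{H₁,E₁,H₂,E₂}^s is a compact convex set, and every ρ ∈ 𝔖_{H₁,E₁,H₂,E₂}^s can be represented as ρ = Σ_{i=1}^{d²} p_i σ_i, where (p_i)_{i=1}^{d²} are nonnegative reals summing to 1 and each σ_i is a pure state (a rank-one orthogonal projection) belonging to 𝔖_{H₁,E₁,H₂,E₂}^s. -/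

import Mathlib

open scoped Matrix ComplexOrder

/-- `ρ` is a density matrix: positive semidefinite with trace one. -/
def IsDensityMatrix {d : ℕ} (ρ : Matrix (Fin d) (Fin d) ℂ) : Prop :=
  ρ.PosSemidef ∧ ρ.trace = 1

/-- `ρ` is a pure state: a density matrix that is a rank-one orthogonal
projection (equivalently, an idempotent density matrix). -/
def IsPureState {d : ℕ} (ρ : Matrix (Fin d) (Fin d) ℂ) : Prop :=
  IsDensityMatrix ρ ∧ ρ * ρ = ρ


open Matrix in
/-- Spectral decomposition in explicit form for density matrices. -/
theorem density_spectral {d : ℕ} {ρ : Matrix (Fin d) (Fin d) ℂ} (h : IsDensityMatrix ρ) :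
    ∃ (U : Matrix (Fin d) (Fin d) ℂ) (l : Fin d → ℝ), U * Uᴴ = 1 ∧ Uᴴ * U = 1 ∧ (∀ i, 0 ≤ l i) ∧
      ∑ i, l i = 1 ∧ ρ = U * diagonal (fun i => (l i : ℂ)) * Uᴴ := by
  refine ⟨h.1.1.eigenvectorUnitary, h.1.1.eigenvalues, ?_, ?_, h.1.eigenvalues_nonneg, ?_, ?_⟩
  · exact Unitary.mul_star_self_of_mem h.1.1.eigenvectorUnitary.2
  · exact Unitary.star_mul_self_of_mem h.1.1.eigenvectorUnitary.2
  · have := h.1.1.trace_eq_sum_eigenvalues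
    have h2 := this.symm.trans h.2
    rw [← RCLike.ofReal_sum] at h2
    exact Complex.ofReal_injective (h2.trans Complex.ofReal_one.symm)
  · have := h.1.1.spectral_theorem
    rw [Unitary.conjStarAlgAut_apply] at this
    exact this

open Matrix in
theorem density_entry_bound {d : ℕ} {ρ : Matrix (Fin d) (Fin d) ℂ} (h : IsDensityMatrix ρ)
    (i j : Fin d) : ‖ρ i j‖ ≤ 1 := by
  obtain ⟨U, l, hU, hU', hl, hs, rfl⟩ := density_spectral h
  have hmem : U ∈ Matrix.unitaryGroup (Fin d) ℂ := ⟨hU', hU⟩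
  rw [Matrix.mul_apply]
  simp only [Matrix.mul_diagonal, conjTranspose_apply]
  refine (norm_sum_le _ _).trans ?_
  rw [← hs]
  refine Finset.sum_le_sum fun k _ => ?_
  have h1 := entry_norm_bound_of_unitary hmem i k
  have h2 := entry_norm_bound_of_unitary hmem j k
  rw [norm_mul, norm_mul, norm_star, Complex.norm_real, Real.norm_of_nonneg (hl k)]
  calc ‖U i k‖ * l k * ‖U j k‖ ≤ 1 * l k * 1 := by
        have := hl k
        gcongr
    _ = l k := by ring

theorem isClosed_posSemidef (d : ℕ) :
    IsClosed {ρ : Matrix (Fin d) (Fin d) ℂ | ρ.PosSemidef} := by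
  have : {ρ : Matrix (Fin d) (Fin d) ℂ | ρ.PosSemidef} =
      {ρ | ρᴴ = ρ} ∩ ⋂ x : Fin d → ℂ, {ρ | 0 ≤ star x ⬝ᵥ (ρ *ᵥ x)} := by
    ext ρ
    simp only [Set.mem_ofPred_eq, Matrix.posSemidef_iff_dotProduct_mulVec, Set.mem_inter_iff,
      Set.mem_iInter]
    rfl
  rw [this]
  refine (isClosed_eq (by fun_prop) (by fun_prop)).inter (isClosed_iInter fun x => ?_)
  exact isClosed_le (by fun_prop) (by fun_prop)

theorem isClosed_density (d : ℕ) :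
    IsClosed {ρ : Matrix (Fin d) (Fin d) ℂ | IsDensityMatrix ρ} :=
  (isClosed_posSemidef d).inter (isClosed_eq (by fun_prop) (by fun_prop))

theorem isCompact_density (d : ℕ) :
    IsCompact {ρ : Matrix (Fin d) (Fin d) ℂ | IsDensityMatrix ρ} := by
  have hc : IsCompact (Set.pi Set.univ (fun _ : Fin d => Set.pi Set.univ
      (fun _ : Fin d => Metric.closedBall (0 : ℂ) 1))) :=
    isCompact_univ_pi fun _ => isCompact_univ_pi fun _ => isCompact_closedBall _ _
  refine IsCompact.of_isClosed_subset (X := Matrix (Fin d) (Fin d) ℂ) hc (isClosed_density d) ?_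
  intro ρ h i _ j _
  simpa using density_entry_bound h i j

/-- The constrained set of states. -/
def cset {d : ℕ} (H : Fin 2 → Matrix (Fin d) (Fin d) ℂ) (E : Fin 2 → ℝ) (s : Set (Fin 2)) :
    Set (Matrix (Fin d) (Fin d) ℂ) :=
  {ρ : Matrix (Fin d) (Fin d) ℂ | IsDensityMatrix ρ ∧
        (∀ k ∉ s, (H k * ρ).trace.re ≤ E k) ∧ (∀ k ∈ s, (H k * ρ).trace.re = E k)}

theorem isCompact_cset {d : ℕ} (H : Fin 2 → Matrix (Fin d) (Fin d) ℂ) (E : Fin 2 → ℝ)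
    (s : Set (Fin 2)) : IsCompact (cset H E s) := by
  have : cset H E s = {ρ | IsDensityMatrix ρ} ∩ ((⋂ k : Fin 2, ⋂ _ : k ∉ s,
      {ρ | (H k * ρ).trace.re ≤ E k}) ∩ (⋂ k : Fin 2, ⋂ _ : k ∈ s,
      {ρ | (H k * ρ).trace.re = E k})) := by
    ext ρ
    simp [cset]
  rw [this]
  refine (isCompact_density d).inter_right (IsClosed.inter ?_ ?_)
  · exact isClosed_iInter fun k => isClosed_iInter fun _ => isClosed_le (by fun_prop) (by fun_prop)
  · exact isClosed_iInter fun k => isClosed_iInter fun _ => isClosed_eq (by fun_prop) (by fun_prop)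

theorem convex_cset {d : ℕ} (H : Fin 2 → Matrix (Fin d) (Fin d) ℂ) (E : Fin 2 → ℝ)
    (s : Set (Fin 2)) : Convex ℝ (cset H E s) := by
  rintro x ⟨⟨hx1, hx2⟩, hx3, hx4⟩ y ⟨⟨hy1, hy2⟩, hy3, hy4⟩ a b ha hb hab
  have key : ∀ k, (H k * (a • x + b • y)).trace.re =
      a * (H k * x).trace.re + b * (H k * y).trace.re := by
    intro k
    simp [Matrix.mul_add, Matrix.trace_add]
  refine ⟨⟨(hx1.smul ha).add (hy1.smul hb), ?_⟩, fun k hk => ?_, fun k hk => ?_⟩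
  · rw [Matrix.trace_add, Matrix.trace_smul, Matrix.trace_smul, hx2, hy2, ← add_smul, hab, one_smul]
  · rw [key]
    have := hx3 k hk
    have := hy3 k hk
    calc _ ≤ a * E k + b * E k := by gcongr
      _ = E k := by rw [← add_mul, hab, one_mul]
  · rw [key, hx4 k hk, hy4 k hk, ← add_mul, hab, one_mul]

/-- Affinely independent families of density matrices have at most `d ^ 2` members. -/
theorem card_le_of_affineIndependent {d : ℕ} {ι : Type*} [Fintype ι]
    (z : ι → Matrix (Fin d) (Fin d) ℂ) (hz : ∀ i, IsDensityMatrix (z i))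
    (hi : AffineIndependent ℝ z) : Fintype.card ι ≤ d ^ 2 := by
  have hR : ∀ r : ι → ℝ, ∑ i, (r i : ℂ) • z i = 0 → ∀ i, r i = 0 := by
    intro r hr i
    rw [affineIndependent_iff] at hi
    refine hi Finset.univ r ?_ ?_ i (Finset.mem_univ i)
    · have := congrArg Matrix.trace hr
      rw [Matrix.trace_sum] at this
      simp only [Matrix.trace_smul, (hz _).2, Matrix.trace_zero, smul_eq_mul, mul_one] at this
      exact_mod_cast this
    · rw [← hr]
      exact Finset.sum_congr rfl fun i _ => by ext; simp
  have hC : LinearIndependent ℂ z := by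
    rw [Fintype.linearIndependent_iff]
    intro g hg
    have hg' : ∑ i, (star (g i)) • z i = 0 := by
      have := congrArg Matrix.conjTranspose hg
      rw [Matrix.conjTranspose_sum, Matrix.conjTranspose_zero] at this
      rw [← this]
      refine Finset.sum_congr rfl fun i _ => ?_
      rw [Matrix.conjTranspose_smul, (hz i).1.1.eq]
    have h1 : ∀ i, (g i).re = 0 := by
      apply hR
      have : ∀ i, (((g i).re : ℝ) : ℂ) = (1/2 : ℂ) * (g i + star (g i)) := by
        intro i
        apply Complex.ext <;> simp
        ring
      simp only [this, mul_smul, ← Finset.smul_sum, add_smul, Finset.sum_add_distrib, hg, hg',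
        add_zero, smul_zero]
    have h2 : ∀ i, (g i).im = 0 := by
      apply hR
      have : ∀ i, (((g i).im : ℝ) : ℂ) = (-Complex.I/2 : ℂ) * (g i - star (g i)) := by
        intro i
        apply Complex.ext <;> simp
        ring
      simp only [this, mul_smul, ← Finset.smul_sum, sub_smul, Finset.sum_sub_distrib, hg, hg',
        sub_zero, smul_zero]
    intro i
    exact Complex.ext (h1 i) (h2 i)
  have := hC.fintype_card_le_finrank
  rw [Module.finrank_matrix] at this
  simpa [sq] using this

/-- The pure constrained states. -/
def pset {d : ℕ} (H : Fin 2 → Matrix (Fin d) (Fin d) ℂ) (E : Fin 2 → ℝ) (s : Set (Fin 2)) :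
    Set (Matrix (Fin d) (Fin d) ℂ) := cset H E s ∩ {ρ | ρ * ρ = ρ}

/-- Mixtures of `d ^ 2` pure constrained states. -/
def mixset {d : ℕ} (H : Fin 2 → Matrix (Fin d) (Fin d) ℂ) (E : Fin 2 → ℝ) (s : Set (Fin 2)) :
    Set (Matrix (Fin d) (Fin d) ℂ) :=
  (fun q : (Fin (d ^ 2) → ℝ) × (Fin (d ^ 2) → Matrix (Fin d) (Fin d) ℂ) => ∑ i, q.1 i • q.2 i) ''
    (stdSimplex ℝ (Fin (d ^ 2)) ×ˢ Set.pi Set.univ (fun _ => pset H E s))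

theorem isCompact_mixset {d : ℕ} (H : Fin 2 → Matrix (Fin d) (Fin d) ℂ) (E : Fin 2 → ℝ)
    (s : Set (Fin 2)) : IsCompact (mixset H E s) := by
  have hP : IsCompact (pset H E s) :=
    (isCompact_cset H E s).inter_right (isClosed_eq (by fun_prop) (by fun_prop))
  refine ((isCompact_stdSimplex ℝ _).prod (isCompact_univ_pi fun _ => hP)).image ?_
  fun_prop

theorem convexHull_subset_mixset {d : ℕ} (H : Fin 2 → Matrix (Fin d) (Fin d) ℂ) (E : Fin 2 → ℝ)
    (s : Set (Fin 2)) : convexHull ℝ (pset H E s) ⊆ mixset H E s := by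
  intro x hx
  obtain ⟨ι, _, z, w, hz, hi, hw, hw1, rfl⟩ := eq_pos_convex_span_of_mem_convexHull hx
  have hz' : ∀ i, z i ∈ pset H E s := fun i => hz ⟨i, rfl⟩
  have hcard := card_le_of_affineIndependent z (fun i => (hz' i).1.1) hi
  have hne : Nonempty ι := by
    by_contra hcon
    rw [not_nonempty_iff] at hcon
    simp at hw1
  obtain ⟨i0⟩ := hne
  obtain ⟨f⟩ : Nonempty (ι ↪ Fin (d ^ 2)) :=
    Function.Embedding.nonempty_of_card_le (by simpa using hcard)
  have hp0 : ∀ j ∉ Set.range f, Function.extend f w 0 j = 0 := fun j hj =>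
    Function.extend_apply' _ _ _ hj
  refine ⟨(Function.extend f w 0, Function.extend f z (fun _ => z i0)), ⟨⟨?_, ?_⟩, ?_⟩, ?_⟩
  · intro j
    change 0 ≤ Function.extend f w 0 j
    by_cases hj : j ∈ Set.range f
    · obtain ⟨i, rfl⟩ := hj
      rw [f.injective.extend_apply]
      exact (hw i).le
    · rw [hp0 j hj]
  · rw [← hw1]
    exact (Fintype.sum_of_injective f f.injective w _ hp0
      (fun i => (f.injective.extend_apply _ _ _).symm)).symm
  · intro j _
    by_cases hj : j ∈ Set.range f
    · obtain ⟨i, rfl⟩ := hj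
      simp only [f.injective.extend_apply]
      exact hz' i
    · simp only [Function.extend_apply' _ _ _ hj]
      exact hz' i0
  · refine (Fintype.sum_of_injective f f.injective _ _ (fun j hj => ?_) (fun i => ?_)).symm
    · simp only [hp0 j hj, zero_smul]
    · simp only [f.injective.extend_apply]

open Matrix in
/-- The Hermitian perturbation supported on the indices `i`, `j`. -/
noncomputable def pert {d : ℕ} (i j : Fin d) (y : Fin 4 → ℝ) : Matrix (Fin d) (Fin d) ℂ :=
  single i i (y 0 : ℂ) + single j j (y 1 : ℂ) + single i j (⟨y 2, y 3⟩ : ℂ)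
    + single j i (⟨y 2, -y 3⟩ : ℂ)

open Matrix in
theorem vecMulVec_pair {d : ℕ} (i j : Fin d) (a b : ℂ) :
    vecMulVec (Pi.single i a + Pi.single j b) (star (Pi.single i a + Pi.single j b)) =
      single i i (a * star a) + single j j (b * star b) + single i j (a * star b)
        + single j i (b * star a) := by
  have e : ∀ (p q : Fin d) (x z : ℂ),
      vecMulVec (Pi.single p x) (Pi.single q z) = single p q (x * z) := by
    intro p q x z
    ext k m
    simp only [vecMulVec_apply, single_apply, Pi.single_apply]
    by_cases h1 : k = p <;> by_cases h2 : m = q <;> simp [h1, h2, Ne.symm, eq_comm]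
  simp only [star_add, ← Pi.single_star, add_vecMulVec, vecMulVec_add, e]
  abel

open Matrix in
theorem pert_add {d : ℕ} (i j : Fin d) (y y' : Fin 4 → ℝ) :
    pert i j (y + y') = pert i j y + pert i j y' := by
  have e1 : (⟨y 2 + y' 2, y 3 + y' 3⟩ : ℂ) = ⟨y 2, y 3⟩ + ⟨y' 2, y' 3⟩ := rfl
  have e2 : (⟨y 2 + y' 2, -(y 3 + y' 3)⟩ : ℂ) = ⟨y 2, -y 3⟩ + ⟨y' 2, -y' 3⟩ := by
    apply Complex.ext <;> simp
    ring
  simp only [pert, Pi.add_apply, e1, e2, Complex.ofReal_add, single_add]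
  abel

open Matrix in
theorem pert_smul {d : ℕ} (i j : Fin d) (a : ℝ) (y : Fin 4 → ℝ) :
    pert i j (a • y) = a • pert i j y := by
  have e1 : (⟨a * y 2, a * y 3⟩ : ℂ) = a • ⟨y 2, y 3⟩ := by
    apply Complex.ext <;> simp
  have e2 : (⟨a * y 2, -(a * y 3)⟩ : ℂ) = a • ⟨y 2, -y 3⟩ := by
    apply Complex.ext <;> simp
  have e3 : ∀ x : ℝ, ((a * x : ℝ) : ℂ) = a • (x : ℂ) := fun x => by simp
  simp only [pert, Pi.smul_apply, smul_eq_mul, e1, e2, e3, smul_add, smul_single]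

open Matrix in
theorem pert_posSemidef {d : ℕ} {i j : Fin d} (hij : i ≠ j) (y : Fin 4 → ℝ) (l : Fin d → ℝ)
    (hl : ∀ k, 0 ≤ l k) (δ : ℝ) (hδ : 0 < δ) (hi : δ ≤ l i) (hj : δ ≤ l j)
    (hy : ∀ k, |y k| ≤ δ / 4) :
    (diagonal (fun k => (l k : ℂ)) + pert i j y).PosSemidef := by
  set c : ℂ := ⟨y 2, y 3⟩ with hc
  set β : ℝ := √(δ / 2) with hβ
  have hβ2 : β * β = δ / 2 := Real.mul_self_sqrt (by positivity)
  have hβ0 : 0 < β := Real.sqrt_pos.2 (by positivity)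
  set v : Fin d → ℂ := Pi.single i (c / β) + Pi.single j (β : ℂ) with hv
  set m : Fin d → ℝ := l + (Pi.single i (y 0 - ((y 2) ^ 2 + (y 3) ^ 2) * (2 / δ)) : Fin d → ℝ)
    + (Pi.single j (y 1 - δ / 2) : Fin d → ℝ) with hm
  have hdec : diagonal (fun k => (l k : ℂ)) + pert i j y =
      diagonal (fun k => (m k : ℂ)) + vecMulVec v (star v) := by
    have hβC : (β : ℂ) ≠ 0 := by exact_mod_cast hβ0.ne'
    have e1 : (c / β) * star (c / β) = ((((y 2) ^ 2 + (y 3) ^ 2) * (2 / δ) : ℝ) : ℂ) := by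
      have : (c / β) * star (c / β) = (c * star c) / ((β * β : ℝ) : ℂ) := by
        simp only [star_div₀, Complex.star_def, Complex.conj_ofReal]
        push_cast
        field_simp
      rw [this, hβ2, Complex.star_def, Complex.mul_conj, Complex.normSq_apply, hc]
      push_cast
      field_simp
    have e2 : (c / β) * star (β : ℂ) = c := by
      simp only [Complex.star_def, Complex.conj_ofReal]
      field_simp
    have e3 : (β : ℂ) * star (c / β) = (⟨y 2, -y 3⟩ : ℂ) := by
      simp only [star_div₀, Complex.star_def, Complex.conj_ofReal]
      field_simp
      rfl
    have e4 : (β : ℂ) * star (β : ℂ) = ((δ / 2 : ℝ) : ℂ) := by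
      simp only [Complex.star_def, Complex.conj_ofReal]
      exact_mod_cast hβ2
    have hvv : vecMulVec v (star v) = single i i ((c / β) * star (c / β))
        + single j j ((β : ℂ) * star (β : ℂ)) + single i j ((c / β) * star (β : ℂ))
        + single j i ((β : ℂ) * star (c / β)) := by
      exact vecMulVec_pair i j _ _
    rw [hvv, e1, e2, e3, e4]
    have hmd : diagonal (fun k => (m k : ℂ)) = diagonal (fun k => (l k : ℂ))
        + single i i ((y 0 - ((y 2) ^ 2 + (y 3) ^ 2) * (2 / δ) : ℝ) : ℂ)
        + single j j ((y 1 - δ / 2 : ℝ) : ℂ) := by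
      rw [← diagonal_single, ← diagonal_single, diagonal_add, diagonal_add]
      congr 1
      ext k
      simp only [hm, Pi.add_apply, Pi.single_apply]
      split_ifs <;> simp
    rw [hmd, pert, Complex.ofReal_sub, Complex.ofReal_sub, sub_eq_add_neg, sub_eq_add_neg,
      single_add, single_add, ← single_neg, ← single_neg]
    abel
  rw [hdec]
  refine PosSemidef.add (PosSemidef.diagonal fun k => ?_) (posSemidef_vecMulVec_self_star v)
  have h0 := abs_le.1 (hy 0)
  have h1 := abs_le.1 (hy 1)
  have h2 := sq_le_sq' (abs_le.1 (hy 2)).1 (abs_le.1 (hy 2)).2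
  have h3 := sq_le_sq' (abs_le.1 (hy 3)).1 (abs_le.1 (hy 3)).2
  suffices 0 ≤ m k by simpa using this
  have hq : ((y 2) ^ 2 + (y 3) ^ 2) * (2 / δ) ≤ δ / 4 := by
    calc _ ≤ ((δ / 4) ^ 2 + (δ / 4) ^ 2) * (2 / δ) := by gcongr
      _ = δ / 4 := by field_simp; norm_num
  simp only [hm, Pi.add_apply, Pi.single_apply]
  have := hl k
  by_cases hki : k = i
  · subst hki
    simp only [if_pos, if_neg hij]
    linarith
  · by_cases hkj : k = j
    · subst hkj
      simp only [if_pos, if_neg hki]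
      linarith
    · simp [hki, hkj, this]

open Matrix in
theorem extreme_pure {d : ℕ} (H : Fin 2 → Matrix (Fin d) (Fin d) ℂ) (E : Fin 2 → ℝ)
    (s : Set (Fin 2)) : (cset H E s).extremePoints ℝ ⊆ pset H E s := by
  intro ρ hρ
  refine ⟨hρ.1, ?_⟩
  obtain ⟨U, l, hU, hU', hl, hs, hρU⟩ := density_spectral hρ.1.1
  have hkey : ∀ i j, i ≠ j → 0 < l i → 0 < l j → False := by
    intro i j hij hli hlj
    let L : (Fin 4 → ℝ) →ₗ[ℝ] Matrix (Fin d) (Fin d) ℂ :=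
      { toFun := fun y => U * pert i j y * Uᴴ
        map_add' := fun y y' => by
          rw [pert_add, mul_add, add_mul]
        map_smul' := fun a y => by
          rw [RingHom.id_apply, pert_smul, mul_smul_comm, smul_mul_assoc] }
    let T : (Fin 4 → ℝ) →ₗ[ℝ] (Fin 3 → ℝ) :=
      { toFun := fun y => ![(L y).trace.re, (H 0 * L y).trace.re, (H 1 * L y).trace.re]
        map_add' := fun y y' => by
          simp [map_add, mul_add, trace_add]
        map_smul' := fun a y => by
          simp [map_smul, trace_smul] }
    have hker : LinearMap.ker T ≠ ⊥ := LinearMap.ker_ne_bot_of_finrank_lt (by simp)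
    obtain ⟨y, hy, hy0⟩ := (Submodule.ne_bot_iff _).1 hker
    rw [LinearMap.mem_ker] at hy
    have hT0 : (L y).trace.re = 0 := congrFun hy 0
    have hT1 : ∀ k, (H k * L y).trace.re = 0 := by
      intro k
      fin_cases k
      · exact congrFun hy 1
      · exact congrFun hy 2
    set δ := min (l i) (l j) with hδ
    have hδ0 : 0 < δ := lt_min hli hlj
    set M := ∑ k, |y k| + 1 with hM
    have hM0 : 0 < M := by positivity
    set t := δ / 4 / M with ht
    have ht0 : 0 < t := by positivity
    have hbound : ∀ e : ℝ, |e| = t → ∀ k, |(e • y) k| ≤ δ / 4 := by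
      intro e he k
      rw [Pi.smul_apply, smul_eq_mul, abs_mul, he, ht, div_mul_eq_mul_div, div_le_iff₀ hM0]
      have : |y k| ≤ M := by
        have := Finset.single_le_sum (f := fun k => |y k|) (fun _ _ => abs_nonneg _)
          (Finset.mem_univ k)

        linarith
      gcongr
    have hLim : (L y).trace.im = 0 := by
      have hh : (L y).IsHermitian := by
        have : (pert i j y).IsHermitian := by
          rw [IsHermitian, pert, conjTranspose_add, conjTranspose_add, conjTranspose_add,
            conjTranspose_single, conjTranspose_single, conjTranspose_single, conjTranspose_single]
          have e1 : star (⟨y 2, y 3⟩ : ℂ) = ⟨y 2, -y 3⟩ := rfl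
          have e2 : star (⟨y 2, -y 3⟩ : ℂ) = ⟨y 2, y 3⟩ := by rw [← e1, star_star]
          have e3 : ∀ x : ℝ, star (x : ℂ) = x := Complex.conj_ofReal
          rw [e1, e2, e3, e3]
          abel
        exact isHermitian_mul_mul_conjTranspose U this
      have := congrArg Matrix.trace hh.eq
      rw [trace_conjTranspose] at this
      exact Complex.conj_eq_iff_im.1 this
    have hLt : (L y).trace = 0 := Complex.ext hT0 hLim
    have hmem : ∀ e : ℝ, |e| = t → ρ + L (e • y) ∈ cset H E s := by
      intro e he
      have htr : ∀ k, (H k * (ρ + L (e • y))).trace.re = (H k * ρ).trace.re := by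
        intro k
        rw [map_smul, mul_add, trace_add, mul_smul_comm, trace_smul]
        simp [hT1 k]
      refine ⟨⟨?_, ?_⟩, fun k hk => ?_, fun k hk => ?_⟩
      · have := (pert_posSemidef hij (e • y) l hl δ hδ0 (min_le_left _ _) (min_le_right _ _)
          (hbound e he)).mul_mul_conjTranspose_same U
        rw [mul_add, add_mul, ← hρU] at this
        exact this
      · rw [map_smul, trace_add, trace_smul, hLt, smul_zero, add_zero, hρ.1.1.2]
      · rw [htr]; exact hρ.1.2.1 k hk
      · rw [htr]; exact hρ.1.2.2 k hk
    have hp := hmem t (abs_of_pos ht0)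
    have hn := hmem (-t) (by rw [abs_neg, abs_of_pos ht0])
    have hseg : ρ ∈ openSegment ℝ (ρ + L (t • y)) (ρ + L ((-t) • y)) := by
      refine ⟨1/2, 1/2, by norm_num, by norm_num, by norm_num, ?_⟩
      rw [neg_smul, map_neg]
      module
    have h0 := hρ.2 hp hn hseg
    have h1 : L (t • y) = 0 := by simpa using h0
    rw [map_smul, smul_eq_zero] at h1
    have h2 : L y = 0 := h1.resolve_left ht0.ne'
    have h3 : pert i j y = 0 := by
      have : Uᴴ * (U * pert i j y * Uᴴ) * U = 0 := by
        have h2' : U * pert i j y * Uᴴ = 0 := h2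
        rw [h2']; simp
      calc pert i j y = (Uᴴ * U) * pert i j y * (Uᴴ * U) := by rw [hU']; simp
        _ = Uᴴ * (U * pert i j y * Uᴴ) * U := by simp only [mul_assoc]
        _ = 0 := this
    apply hy0
    have a1 := congrFun (congrFun h3 i) i
    have a2 := congrFun (congrFun h3 j) j
    have a3 := congrFun (congrFun h3 i) j
    simp [pert, single_apply, hij, hij.symm] at a1 a2 a3
    have a4 := congrArg Complex.re a3
    have a5 := congrArg Complex.im a3
    simp at a4 a5
    ext k
    fin_cases k <;> simp [a1, a2, a4, a5]
  have hidem : ∀ k, l k * l k = l k := by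
    intro k
    rcases (hl k).eq_or_lt with h | h
    · rw [← h]; simp
    · have : ∑ i, l i = l k := by
        refine Finset.sum_eq_single k (fun j _ hj => ?_) (by simp)
        by_contra hne
        exact hkey j k hj (lt_of_le_of_ne (hl j) (Ne.symm hne)) h
      rw [← this, hs]; simp
  change ρ * ρ = ρ
  rw [hρU]
  calc _ = U * diagonal (fun i => (l i : ℂ)) * (Uᴴ * U) * diagonal (fun i => (l i : ℂ)) * Uᴴ := by
        simp only [mul_assoc]
    _ = U * (diagonal (fun i => (l i : ℂ)) * diagonal (fun i => (l i : ℂ))) * Uᴴ := by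
        rw [hU']; simp only [mul_assoc, one_mul]
    _ = _ := by
        rw [diagonal_mul_diagonal]
        congr 3
        ext k
        exact_mod_cast hidem k

theorem cset_subset_mixset {d : ℕ} (H : Fin 2 → Matrix (Fin d) (Fin d) ℂ) (E : Fin 2 → ℝ)
    (s : Set (Fin 2)) : cset H E s ⊆ mixset H E s := by
  have : LocallyConvexSpace ℝ (Matrix (Fin d) (Fin d) ℂ) :=
    inferInstanceAs (LocallyConvexSpace ℝ (Fin d → Fin d → ℂ))
  rw [← closure_convexHull_extremePoints (isCompact_cset H E s) (convex_cset H E s)]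
  refine closure_minimal ?_ (isCompact_mixset H E s).isClosed
  exact (convexHull_mono (extreme_pure H E s)).trans (convexHull_subset_mixset H E s)

theorem stmt19 (d : ℕ) (hd : 1 ≤ d)
    (H : Fin 2 → Matrix (Fin d) (Fin d) ℂ) (hH : ∀ k, (H k).PosSemidef)
    (E : Fin 2 → ℝ) (s : Set (Fin 2)) :
    IsCompact {ρ : Matrix (Fin d) (Fin d) ℂ | IsDensityMatrix ρ ∧
        (∀ k ∉ s, (H k * ρ).trace.re ≤ E k) ∧ (∀ k ∈ s, (H k * ρ).trace.re = E k)} ∧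
    Convex ℝ {ρ : Matrix (Fin d) (Fin d) ℂ | IsDensityMatrix ρ ∧
        (∀ k ∉ s, (H k * ρ).trace.re ≤ E k) ∧ (∀ k ∈ s, (H k * ρ).trace.re = E k)} ∧
    ∀ ρ ∈ {ρ : Matrix (Fin d) (Fin d) ℂ | IsDensityMatrix ρ ∧
        (∀ k ∉ s, (H k * ρ).trace.re ≤ E k) ∧ (∀ k ∈ s, (H k * ρ).trace.re = E k)},
      ∃ (p : Fin (d ^ 2) → ℝ) (σ : Fin (d ^ 2) → Matrix (Fin d) (Fin d) ℂ),
        (∀ i, 0 ≤ p i) ∧ (∑ i, p i) = 1 ∧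
        (∀ i, IsPureState (σ i) ∧
          σ i ∈ {ρ : Matrix (Fin d) (Fin d) ℂ | IsDensityMatrix ρ ∧
            (∀ k ∉ s, (H k * ρ).trace.re ≤ E k) ∧
            (∀ k ∈ s, (H k * ρ).trace.re = E k)}) ∧
        ρ = ∑ i, p i • σ i := by
  refine ⟨isCompact_cset H E s, convex_cset H E s, fun ρ hρ => ?_⟩
  obtain ⟨⟨p, σ⟩, ⟨⟨hp0, hp1⟩, hσ⟩, hsum⟩ := cset_subset_mixset H E s hρ
  refine ⟨p, σ, hp0, hp1, fun i => ?_, hsum.symm⟩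
  have := hσ i (Set.mem_univ i)
  exact ⟨⟨this.1.1, this.2⟩, this.1⟩
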